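/- arXiv:2410.04421 — 7 statements merged into one kernel-verified Lean document; each statement's English description precedes it below -/
import Mathlib

section
/- Feature completeness of OR-interaction feature components (Axiom 1 satisfied, Theorem 2 with S = N): the sum of the OR Harsanyi interactions over all nonempty subsets of N, added to the baseline feature, recovers the full feature, i.e., F(N) = F(∅) + ∑_{A ⊆ N, A ≠ ∅} I(A). -/
/-!
Summing `I(A)` over all `A`, the empty set included, and exchanging the two sums gives `F(N \ L)`
the coefficient `-∑_{A ⊇ L} (-1)^{|A|-|L|}`. This alternating sum vanishes unless `L = N`
(`sum_superset_neg_one_pow`), so the total is `-F(∅)` (`sum_orInteraction`). Since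
`I(∅) = -F(N)`, separating the term `A = ∅` gives the claim.
-/

/-- The OR Harsanyi interaction of a subset `A`, defined from the minimal-feature
map `F : Finset α → E` by `I(A) = -∑_{L ⊆ A} (-1)^{|A|-|L|} • F(N \ L)`,
where `N` is the full index set `Finset.univ`. -/
def orInteraction {α : Type*} [Fintype α] [DecidableEq α] {E : Type*} [AddCommGroup E]
    (F : Finset α → E) (A : Finset α) : E :=
  -∑ L ∈ A.powerset, ((-1 : ℤ) ^ (A.card - L.card)) • F (Finset.univ \ L)

/-- The supersets of `L` are the sets `L ∪ B` with `B ⊆ Lᶜ`, so this is the alternating sum over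
the subsets of `Lᶜ`. -/
theorem sum_superset_neg_one_pow {α : Type*} [Fintype α] [DecidableEq α] (L : Finset α) :
    ∑ A ∈ Finset.univ.filter (fun A : Finset α => L ⊆ A), (-1 : ℤ) ^ (A.card - L.card) =
      if L = Finset.univ then 1 else 0 := by
  have h : ∑ A ∈ Finset.univ.filter (fun A : Finset α => L ⊆ A), (-1 : ℤ) ^ (A.card - L.card) =
      ∑ B ∈ Lᶜ.powerset, (-1 : ℤ) ^ B.card := by
    refine Finset.sum_nbij' (fun A => A \ L) (fun B => L ∪ B) ?_ ?_ ?_ ?_ ?_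
    · intro A _
      simp only [Finset.mem_powerset]
      intro x hx
      simp_all
    · intro B _
      simp
    · intro A hA
      exact Finset.union_sdiff_of_subset (by simpa using hA)
    · intro B hB
      have hd : Disjoint L B := by
        rw [disjoint_comm, ← Finset.subset_compl_iff_disjoint_right]
        simpa using hB
      exact Finset.union_sdiff_cancel_left hd
    · intro A hA
      rw [Finset.card_sdiff_of_subset (by simpa using hA)]
  rw [h, Finset.sum_powerset_neg_one_pow_card]
  simp only [Finset.compl_eq_empty_iff]

theorem sum_orInteraction {α : Type*} [Fintype α] [DecidableEq α]
    {E : Type*} [AddCommGroup E] (F : Finset α → E) :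
    ∑ A : Finset α, orInteraction F A = -F ∅ := by
  unfold orInteraction
  rw [Finset.sum_neg_distrib, neg_inj, Finset.sum_comm' (t' := Finset.univ)
    (s' := fun L => Finset.univ.filter (fun A : Finset α => L ⊆ A)) (by simp)]
  simp_rw [← Finset.sum_smul, sum_superset_neg_one_pow]
  simp [ite_smul]

/-- Feature completeness of OR-interaction feature components:
`F(N) = F(∅) + ∑_{A ⊆ N, A ≠ ∅} I(A)`. -/
theorem feature_completeness {α : Type*} [Fintype α] [DecidableEq α]
    {E : Type*} [AddCommGroup E] (F : Finset α → E) :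
    F Finset.univ =
      F ∅ + ∑ A ∈ Finset.univ.powerset.filter (fun A : Finset α => A ≠ ∅),
        orInteraction F A := by
  have h_total := sum_orInteraction F
  have h_empty : orInteraction F ∅ = -F Finset.univ := by simp [orInteraction]
  rw [← Finset.add_sum_erase _ _ (Finset.mem_univ ∅), h_empty] at h_total
  rw [Finset.powerset_univ, Finset.filter_ne', ← sub_eq_zero]
  rw [← sub_eq_zero] at h_total
  rw [← neg_eq_zero, ← h_total]
  abel
end

section
/- Universal matching / linear additivity of OR-interaction feature components (Theorem 2): for every subset S ⊆ N, the baseline feature plus the sum of the OR Harsanyi interactions over all subsets A ⊆ N whose intersection with S is nonempty equals the minimal feature of S, i.e., F(S) = F(∅) + ∑_{A ⊆ N, A ∩ S ≠ ∅} I(A). -/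
/-- The alternating sum over the interval `[L, T]` of the Boolean lattice is the Kronecker delta:
`A ↦ A \ L` identifies the interval with the powerset of `T \ L`. -/
theorem sum_interval_neg_one_pow {α : Type*} [DecidableEq α] {L T : Finset α} (h : L ⊆ T) :
    ∑ A ∈ T.powerset.filter (fun A => L ⊆ A), (-1 : ℤ) ^ (A.card - L.card) =
      if L = T then 1 else 0 := by
  have key : ∑ A ∈ T.powerset.filter (fun A => L ⊆ A), (-1 : ℤ) ^ (A.card - L.card) =
      ∑ B ∈ (T \ L).powerset, (-1 : ℤ) ^ B.card := by
    refine Finset.sum_bij' (fun A _ => A \ L) (fun B _ => B ∪ L) ?_ ?_ ?_ ?_ ?_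
    · intro A hA
      simp only [Finset.mem_filter, Finset.mem_powerset] at hA ⊢
      exact Finset.sdiff_subset_sdiff hA.1 subset_rfl
    · intro B hB
      simp only [Finset.mem_filter, Finset.mem_powerset] at hB ⊢
      exact ⟨Finset.union_subset (hB.trans Finset.sdiff_subset) h, Finset.subset_union_right⟩
    · intro A hA
      simp only [Finset.mem_filter] at hA
      exact Finset.sdiff_union_of_subset hA.2
    · intro B hB
      exact Finset.union_sdiff_cancel_right
        (Finset.disjoint_of_subset_left (Finset.mem_powerset.1 hB) Finset.sdiff_disjoint)
    · intro A hA
      simp only [Finset.mem_filter] at hA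
      rw [Finset.card_sdiff_of_subset hA.2]
  rw [key, Finset.sum_powerset_neg_one_pow_card]
  refine if_congr ?_ rfl rfl
  rw [Finset.sdiff_eq_empty_iff_subset]
  exact ⟨fun h' => h.antisymm h', fun h' => h'.ge⟩

/-- Möbius inversion for the OR interactions. -/
theorem sum_powerset_orInteraction {α : Type*} [Fintype α] [DecidableEq α]
    {E : Type*} [AddCommGroup E] (F : Finset α → E) (T : Finset α) :
    ∑ A ∈ T.powerset, orInteraction F A = -F (Finset.univ \ T) := by
  simp only [orInteraction, Finset.sum_neg_distrib]
  congr 1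
  rw [Finset.sum_comm' (t' := T.powerset)
    (s' := fun L => T.powerset.filter (fun A => L ⊆ A))]
  · simp only [← Finset.sum_smul]
    rw [Finset.sum_congr rfl fun L hL => by
      rw [sum_interval_neg_one_pow (Finset.mem_powerset.1 hL)]]
    simp [ite_smul]
  · intro A L
    simp only [Finset.mem_filter, Finset.mem_powerset]
    exact ⟨fun h => ⟨h, h.2.trans h.1⟩, fun h => h.1⟩

/-- Universal matching / linear additivity of OR-interaction feature components:
for every `S ⊆ N`, `F(S) = F(∅) + ∑_{A ⊆ N, A ∩ S ≠ ∅} I(A)`. -/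
theorem universal_matching {α : Type*} [Fintype α] [DecidableEq α]
    {E : Type*} [AddCommGroup E] (F : Finset α → E) (S : Finset α) :
    F S =
      F ∅ + ∑ A ∈ Finset.univ.powerset.filter (fun A : Finset α => (A ∩ S).Nonempty),
        orInteraction F A := by
  have hdisj : Finset.univ.powerset.filter (fun A : Finset α => ¬(A ∩ S).Nonempty) =
      (Finset.univ \ S).powerset := by
    ext A
    simp [Finset.not_nonempty_iff_eq_empty, ← Finset.disjoint_iff_inter_eq_empty,
      Finset.subset_sdiff]
  have hsplit := Finset.sum_filter_add_sum_filter_not Finset.univ.powerset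
    (fun A : Finset α => (A ∩ S).Nonempty) (orInteraction F)
  rw [hdisj, sum_powerset_orInteraction, sum_powerset_orInteraction, Finset.sdiff_self,
    Finset.sdiff_sdiff_eq_self (Finset.subset_univ S)] at hsplit
  rw [eq_sub_of_add_eq hsplit]
  abel
end

section
/- Complementary sum of OR interactions: for every subset S ⊆ N, the sum of the OR Harsanyi interactions over all nonempty subsets A contained in N \ S equals F(N) - F(S), i.e., ∑_{A ⊆ N \ S, A ≠ ∅} I(A) = F(N) - F(S). -/
theorem alternating_sum_interval {α : Type*} [DecidableEq α] {L T : Finset α} (h : L ⊆ T) :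
    ∑ A ∈ Finset.Icc L T, (-1 : ℤ) ^ (A.card - L.card) = if L = T then 1 else 0 := by
  have key : ∑ A ∈ Finset.Icc L T, (-1 : ℤ) ^ (A.card - L.card)
      = ∑ B ∈ (T \ L).powerset, (-1 : ℤ) ^ B.card := by
    refine Finset.sum_bij' (fun A _ => A \ L) (fun B _ => B ∪ L) ?_ ?_ ?_ ?_ ?_
    · intro A hA
      rw [Finset.mem_Icc] at hA
      exact Finset.mem_powerset.2 (Finset.sdiff_subset_sdiff hA.2 subset_rfl)
    · intro B hB
      rw [Finset.mem_powerset] at hB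
      exact Finset.mem_Icc.2 ⟨Finset.subset_union_right,
        Finset.union_subset (hB.trans Finset.sdiff_subset) h⟩
    · intro A hA
      exact Finset.sdiff_union_of_subset (Finset.mem_Icc.1 hA).1
    · intro B hB
      exact Finset.union_sdiff_cancel_right
        (Finset.sdiff_disjoint.mono_left (Finset.mem_powerset.1 hB))
    · intro A hA
      rw [Finset.card_sdiff_of_subset (Finset.mem_Icc.1 hA).1]
  rw [key, Finset.sum_powerset_neg_one_pow_card]
  refine if_congr ?_ rfl rfl
  rw [Finset.sdiff_eq_empty_iff_subset]
  exact ⟨fun h' => h.antisymm h', fun e => e ▸ subset_rfl⟩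

theorem boolean_moebius_inversion {α : Type*} [DecidableEq α] {E : Type*} [AddCommGroup E]
    (g : Finset α → E) (T : Finset α) :
    ∑ A ∈ T.powerset, ∑ L ∈ A.powerset, ((-1 : ℤ) ^ (A.card - L.card)) • g L = g T := by
  rw [Finset.sum_comm' (t' := T.powerset) (s' := fun L => Finset.Icc L T)]
  · simp_rw [← Finset.sum_smul]
    rw [Finset.sum_congr rfl fun L hL => by
      rw [alternating_sum_interval (Finset.mem_powerset.1 hL)]]
    simp [ite_smul]
  · intro A L
    simp only [Finset.mem_powerset, Finset.mem_Icc]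
    exact ⟨fun h => ⟨⟨h.2, h.1⟩, h.2.trans h.1⟩, fun h => ⟨h.1.2, h.1.1⟩⟩

/-- Complementary sum of OR interactions: for every `S ⊆ N`,
`∑_{A ⊆ N \ S, A ≠ ∅} I(A) = F(N) - F(S)`. -/
theorem complementary_sum {α : Type*} [Fintype α] [DecidableEq α]
    {E : Type*} [AddCommGroup E] (F : Finset α → E) (S : Finset α) :
    ∑ A ∈ (Finset.univ \ S).powerset.filter (fun A : Finset α => A ≠ ∅),
        orInteraction F A = F Finset.univ - F S := by
  have total : ∑ A ∈ (Finset.univ \ S).powerset, orInteraction F A = -F S := by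
    simp only [orInteraction, Finset.sum_neg_distrib]
    rw [boolean_moebius_inversion (fun L => F (Finset.univ \ L))]
    simp
  have empty : orInteraction F ∅ = -F Finset.univ := by simp [orInteraction]
  have split := Finset.add_sum_erase (Finset.univ \ S).powerset (orInteraction F)
    (Finset.empty_mem_powerset _)
  rw [total, empty] at split
  rw [Finset.filter_ne', eq_sub_of_add_eq' split]
  abel
end

section
/- Dummy axiom of the Harsanyi dividend: if a variable i ∈ N is a dummy variable, i.e., u(S ∪ {i}) = u(S) for all S ⊆ N \ {i}, then i has no interaction with other variables: I_u(S ∪ {i}) = 0 for every nonempty subset S ⊆ N \ {i}. -/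
/-- The Harsanyi dividend interaction: `I_u(S) = ∑_{T ⊆ S} (-1)^{|S|-|T|} u(T)`. -/
def harsanyi {α : Type*} [DecidableEq α] (u : Finset α → ℝ) (S : Finset α) : ℝ :=
  ∑ T ∈ S.powerset, ((-1 : ℝ) ^ (S.card - T.card)) * u T

/-- Dummy axiom: if `i` is a dummy variable, i.e. `u(S ∪ {i}) = u(S)` for all
`S ⊆ N \ {i}`, then `I_u(S ∪ {i}) = 0` for every nonempty `S ⊆ N \ {i}`. -/
theorem harsanyi_dummy {α : Type*} [Fintype α] [DecidableEq α]
    (u : Finset α → ℝ) (i : α)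
    (h : ∀ S : Finset α, S ⊆ Finset.univ \ {i} → u (insert i S) = u S) :
    ∀ S : Finset α, S ⊆ Finset.univ \ {i} → S.Nonempty →
      harsanyi u (insert i S) = 0 := by
  intro S hS _
  have hi : i ∉ S := fun hmem => by simpa using hS hmem
  rw [harsanyi, Finset.sum_powerset_insert hi, ← Finset.sum_add_distrib]
  -- The terms of `T` and `T ∪ {i}` cancel: `u` agrees on them and the signs are opposite.
  refine Finset.sum_eq_zero fun T hT => ?_
  have hTS : T ⊆ S := Finset.mem_powerset.mp hT
  have hle : T.card ≤ S.card := Finset.card_le_card hTS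
  rw [h T (hTS.trans hS), Finset.card_insert_of_notMem hi,
    Finset.card_insert_of_notMem fun hmem => hi (hTS hmem),
    Nat.add_sub_add_right, Nat.sub_add_comm hle, pow_succ]
  ring
end

section
/- Symmetry axiom of the Harsanyi dividend: if two distinct variables i, j ∈ N cooperate with other variables in the same way, i.e., u(S ∪ {i}) = u(S ∪ {j}) for all S ⊆ N \ {i, j}, then they have the same interaction effects with other variables: I_u(S ∪ {i}) = I_u(S ∪ {j}) for all S ⊆ N \ {i, j}. -/
/-- Symmetry axiom: if distinct variables `i, j` cooperate with other variables in
the same way, i.e. `u(S ∪ {i}) = u(S ∪ {j})` for all `S ⊆ N \ {i, j}`, then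
`I_u(S ∪ {i}) = I_u(S ∪ {j})` for all `S ⊆ N \ {i, j}`. -/
theorem harsanyi_symmetry {α : Type*} [Fintype α] [DecidableEq α]
    (u : Finset α → ℝ) (i j : α) (hij : i ≠ j)
    (h : ∀ S : Finset α, S ⊆ Finset.univ \ {i, j} →
      u (insert i S) = u (insert j S)) :
    ∀ S : Finset α, S ⊆ Finset.univ \ {i, j} →
      harsanyi u (insert i S) = harsanyi u (insert j S) := by
  intro S hS
  have hi : i ∉ S := fun hm => by simpa using hS hm
  have hj : j ∉ S := fun hm => by simpa using hS hm
  unfold harsanyi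
  -- Split the subsets of `insert a S` according to whether they contain `a`.
  rw [Finset.sum_powerset_insert hi, Finset.sum_powerset_insert hj,
    Finset.card_insert_of_notMem hi, Finset.card_insert_of_notMem hj]
  congr 1
  refine Finset.sum_congr rfl fun T hT => ?_
  have hTS := Finset.mem_powerset.mp hT
  rw [Finset.card_insert_of_notMem fun hm => hi (hTS hm),
    Finset.card_insert_of_notMem fun hm => hj (hTS hm), h T (hTS.trans hS)]
end

section
/- Interaction distribution axiom of the Harsanyi dividend: let T ⊆ N and c ∈ ℝ, and let the interaction function u_T be defined by u_T(S) = c if T ⊆ S and u_T(S) = 0 otherwise. Then I_{u_T}(T) = c, and I_{u_T}(S) = 0 for every subset S ⊆ N with S ≠ T. -/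
/-- The dividend vanishes on a coalition containing a null player `a`. -/
lemma harsanyi_insert_of_null {α : Type*} [DecidableEq α] (u : Finset α → ℝ) (a : α)
    (hu : ∀ L, u (insert a L) = u L) (S : Finset α) (ha : a ∉ S) :
    harsanyi u (insert a S) = 0 := by
  unfold harsanyi
  rw [Finset.sum_powerset_insert ha, ← Finset.sum_add_distrib]
  refine Finset.sum_eq_zero fun L hL => ?_
  have hLS := Finset.mem_powerset.mp hL
  have haL : a ∉ L := fun h => ha (hLS h)
  -- `L.card ≤ S.card` makes the natural subtractions in the exponents genuine.
  have hcard := Finset.card_le_card hLS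
  rw [hu, Finset.card_insert_of_notMem ha, Finset.card_insert_of_notMem haL,
    Nat.add_sub_add_right, Nat.sub_add_comm hcard, pow_succ]
  ring

/-- Interaction distribution axiom: for the interaction function
`u_T(S) = c` if `T ⊆ S` and `0` otherwise, we have `I_{u_T}(T) = c` and
`I_{u_T}(S) = 0` for every `S ≠ T`. -/
theorem harsanyi_interaction_distribution {α : Type*} [Fintype α] [DecidableEq α]
    (T : Finset α) (c : ℝ) :
    harsanyi (fun S => if T ⊆ S then c else 0) T = c ∧
      ∀ S : Finset α, S ≠ T → harsanyi (fun S => if T ⊆ S then c else 0) S = 0 := by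
  constructor
  · unfold harsanyi
    rw [Finset.sum_eq_single T]
    · simp
    · intro L hL hne
      have hTL : ¬ T ⊆ L := fun h => hne ((Finset.mem_powerset.mp hL).antisymm h)
      simp [hTL]
    · simp
  · intro S hne
    by_cases hST : S ⊆ T
    · unfold harsanyi
      refine Finset.sum_eq_zero fun L hL => ?_
      have hTL : ¬ T ⊆ L := fun h => hne (hST.antisymm (h.trans (Finset.mem_powerset.mp hL)))
      simp [hTL]
    · obtain ⟨a, haS, haT⟩ := Finset.not_subset.mp hST
      rw [← Finset.insert_erase haS]
      refine harsanyi_insert_of_null _ a (fun L => ?_) _ (Finset.notMem_erase a S)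
      simp only [Finset.subset_insert_iff_of_notMem haT]
end

section
/- Linear additivity derived from the axioms (Theorem 1-α): if G satisfies both the consistency property and the spatial boundedness property, then for every set S of image patches, the image generated from only those feature components whose action fields intersect S agrees on S with the image generated from all feature components, i.e., for every i ∈ S, G({k : A(k) ∩ S ≠ ∅})(i) = G(κ)(i), where G(κ) is the image generated from the full component set. -/
/-!
A component whose action field misses `S` does not act on any patch `i ∈ S`. Starting from the
components whose action fields meet `S`, the remaining ones can therefore be inserted one at a time
without changing the image at `i`, until all components are present. The induction is
`SpatialBoundedness.union_apply`.
-/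

/-- The consistency property: each feature component `k` consistently adds the same
regional pattern `Δx k` to the generated image, no matter which other feature
components `Ω` are present. -/
def Consistency {κ α V : Type*} [AddCommGroup V] [DecidableEq κ]
    (G : Finset κ → (α → V)) (Δx : κ → (α → V)) : Prop :=
  ∀ k : κ, ∀ Ω : Finset κ, k ∉ Ω → G (insert k Ω) - G Ω = Δx k

/-- The spatial boundedness property: each feature component `k` only influences the
image patches within its action field `A k`. -/
def SpatialBoundedness {κ α V : Type*} [AddCommGroup V] [DecidableEq κ]
    (G : Finset κ → (α → V)) (A : κ → Finset α) : Prop :=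
  ∀ k : κ, ∀ Ω : Finset κ, k ∉ Ω → ∀ i : α, i ∉ A k → G (insert k Ω) i = G Ω i

/-- At a patch `i` covered by no action field of `T`, the components of `T` contribute
nothing, so they may be added to any `Ω`. -/
theorem SpatialBoundedness.union_apply {κ α V : Type*} [AddCommGroup V] [DecidableEq κ]
    {G : Finset κ → (α → V)} {A : κ → Finset α} (h : SpatialBoundedness G A)
    (Ω T : Finset κ) (i : α) (hT : ∀ k ∈ T, i ∉ A k) : G (Ω ∪ T) i = G Ω i := by
  induction T using Finset.induction_on with
  | empty => simp
  | insert k T _ ih =>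
    have ih := ih fun j hj => hT j (Finset.mem_insert_of_mem hj)
    rw [Finset.union_insert]
    by_cases hk : k ∈ Ω ∪ T
    · rw [Finset.insert_eq_of_mem hk, ih]
    · rw [h k _ hk i (hT k (Finset.mem_insert_self k T)), ih]

/-- Linear additivity derived from the axioms (Theorem 1-α): under consistency and
spatial boundedness, for every set `S` of image patches, the image generated from
only the feature components whose action fields intersect `S` agrees on `S` with
the image generated from all feature components. -/
theorem linear_additivity {κ α V : Type*} [Fintype κ] [DecidableEq κ]
    [Fintype α] [DecidableEq α] [AddCommGroup V]
    (G : Finset κ → (α → V)) (Δx : κ → (α → V)) (A : κ → Finset α)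
    (hcons : Consistency G Δx) (hbound : SpatialBoundedness G A) :
    ∀ S : Finset α, ∀ i ∈ S,
      G (Finset.univ.filter (fun k : κ => (A k ∩ S).Nonempty)) i =
        G Finset.univ i := by
  intro S i hi
  have h := hbound.union_apply (Finset.univ.filter fun k => (A k ∩ S).Nonempty)
    (Finset.univ.filter fun k => ¬(A k ∩ S).Nonempty) i fun k hk hik =>
      (Finset.mem_filter.mp hk).2 ⟨i, Finset.mem_inter.mpr ⟨hik, hi⟩⟩
  rw [Finset.filter_union_filter_not_eq] at h
  exact h.symm
end
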